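/- arXiv:2203.14521 — 3 statements merged into one kernel-verified Lean document; each statement's English description precedes it below -/
import Mathlib

section
/- If a finite quiver Q without loops and multiedges does not admit a rank function, then dim DE(Q) ≥ |Q_0| − |π_0(Q)|. -/
open scoped BigOperators

/-- The vector `ε_(v,w) = e_v - e_w` in `ℝ^V`. -/
def epsVec {V : Type*} [DecidableEq V] (e : V × V) : V → ℝ :=
  fun u => (if u = e.1 then (1 : ℝ) else 0) - (if u = e.2 then (1 : ℝ) else 0)

/-- The directed edge polytope of the quiver with edge set `E`. -/
def DE {V : Type*} [DecidableEq V] (E : Set (V × V)) : Set (V → ℝ) :=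
  convexHull ℝ (epsVec '' E)

/-- The edge relation of a quiver. -/
def edgeRel {V : Type*} (E : Set (V × V)) : V → V → Prop := fun a b => (a, b) ∈ E

/-- Number of connected components (with respect to undirected walks). -/
noncomputable def numComponents {V : Type*} (E : Set (V × V)) : ℕ :=
  Nat.card (Quot (Relation.EqvGen (edgeRel E)))

/-- `E` admits a rank function. -/
def HasRankFn {V : Type*} (E : Set (V × V)) : Prop :=
  ∃ ρ : V → ℝ, ∀ e ∈ E, ρ e.1 + 1 = ρ e.2

open Classical in
/-- Dimension of a polytope: dimension of its affine hull, `-1` for the empty set. -/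
noncomputable def polyDim {V : Type*} (s : Set (V → ℝ)) : ℤ :=
  if s = ∅ then -1 else (Module.finrank ℝ (affineSpan ℝ s).direction : ℤ)

/-- `F` is a face of `P`: `F = P` or `F` is the intersection of `P`
with a supporting hyperplane. -/
def IsFaceOf {V : Type*} (F P : Set (V → ℝ)) : Prop :=
  F = P ∨ ∃ (l : (V → ℝ) →ₗ[ℝ] ℝ) (c : ℝ), (∀ x ∈ P, l x ≤ c) ∧ F = {x ∈ P | l x = c}

/-- `F` is a facet of `P`: a face of dimension `dim P - 1`. -/
def IsFacetOf {V : Type*} (F P : Set (V → ℝ)) : Prop :=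
  IsFaceOf F P ∧ polyDim F = polyDim P - 1

/-- Each connected component of the subquiver `R1` is a full subquiver of `Q1`. -/
def ComponentsFull {V : Type*} (Q1 R1 : Set (V × V)) : Prop :=
  ∀ v w : V, Relation.EqvGen (edgeRel R1) v w → (v, w) ∈ Q1 → (v, w) ∈ R1

/-- Edge set of the contraction `Q/R`. -/
def contraction {V : Type*} (Q1 R1 : Set (V × V)) :
    Set (Quot (Relation.EqvGen (edgeRel R1)) × Quot (Relation.EqvGen (edgeRel R1))) :=
  {p | ∃ e ∈ Q1 \ R1, p = (Quot.mk _ e.1, Quot.mk _ e.2)}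

/-- A quiver is acyclic if it has no closed directed walk of length `> 1`. -/
def IsAcyclicQ {α : Type*} (E : Set (α × α)) : Prop :=
  ¬ ∃ (n : ℕ) (v : Fin (n + 1) → α), 1 < n ∧ v 0 = v (Fin.last n) ∧
      ∀ i : Fin n, (v i.castSucc, v i.succ) ∈ E

/-!
A linear functional `f` that is `1` on every `ε_e` gives the rank function `v ↦ -f (e_v)`. Hence if
there is no rank function, the affine hull of the `ε_e` contains `0` and coincides with their linear
span. A functional annihilates this span exactly when its coordinates are constant on connected
components, so the span has codimension `|π₀(Q)|`.
-/

section LinearAlgebra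

variable {k M : Type*} [AddCommGroup M]

theorem vectorSpan_eq_span_of_zero_mem_affineSpan [Ring k] [Module k M] {s : Set M}
    (h : (0 : M) ∈ affineSpan k s) : vectorSpan k s = Submodule.span k s := by
  rw [← vectorSpan_insert_eq_vectorSpan h,
    vectorSpan_eq_span_vsub_set_right k (Set.mem_insert 0 s)]
  simp

theorem exists_linearMap_eq_one_of_zero_notMem_affineSpan [DivisionRing k] [Module k M]
    {s : Set M} (h : (0 : M) ∉ affineSpan k s) : ∃ f : M →ₗ[k] k, ∀ x ∈ s, f x = 1 := by
  obtain rfl | ⟨x₀, hx₀⟩ := s.eq_empty_or_nonempty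
  · exact ⟨0, by simp⟩
  have hx₀_notMem : x₀ ∉ vectorSpan k s := fun hx ↦ h <| by
    simpa using vadd_mem_affineSpan_of_mem_affineSpan_of_mem_vectorSpan
      (mem_affineSpan k hx₀) (neg_mem hx)
  obtain ⟨f, hf, hfx₀⟩ :=
    LinearMap.exists_extend_of_notMem (0 : vectorSpan k s →ₗ[k] k) hx₀_notMem 1
  refine ⟨f, fun x hx ↦ ?_⟩
  have hvanish : f (x - x₀) = 0 :=
    LinearMap.congr_fun hf ⟨x - x₀, vsub_mem_vectorSpan k hx hx₀⟩
  rwa [map_sub, hfx₀, sub_eq_zero] at hvanish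

end LinearAlgebra

section EdgeSpan

variable {k V : Type*} [DecidableEq V]

theorem piEquiv_apply_single [CommSemiring k] [Finite V] {M : Type*} [AddCommMonoid M]
    [Module k M] (g : V → M) (v : V) : Module.piEquiv V k M g (Pi.single v 1) = g v := by
  rw [← Pi.basisFun_apply, Module.piEquiv, Module.Basis.constr_basis]

/-- The linear span of the vectors `e_v - e_w` over the edges `(v, w)` of a quiver, that is, the
column space of its incidence matrix, with coefficients in `k`. Its codimension over a field counts
the connected components. -/
def edgeSpan (k : Type*) [Ring k] (E : Set (V × V)) : Submodule k (V → k) :=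
  Submodule.span k ((fun e ↦ Pi.single e.1 1 - Pi.single e.2 1) '' E)

theorem mem_dualAnnihilator_edgeSpan_iff [CommRing k] {E : Set (V × V)}
    {f : Module.Dual k (V → k)} :
    f ∈ (edgeSpan k E).dualAnnihilator ↔
      ∀ e ∈ E, f (Pi.single e.1 1) = f (Pi.single e.2 1) := by
  rw [edgeSpan, ← SetLike.mem_coe, Submodule.coe_dualAnnihilator_span, Set.mem_ofPred_eq,
    Set.image_subset_iff]
  refine forall₂_congr fun e _ ↦ ?_
  rw [Set.mem_preimage, SetLike.mem_coe, LinearMap.mem_ker, map_sub, sub_eq_zero]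

theorem dualAnnihilator_edgeSpan [CommRing k] [Finite V] (E : Set (V × V)) :
    (edgeSpan k E).dualAnnihilator =
      LinearMap.range ((Module.piEquiv V k k).toLinearMap ∘ₗ
        LinearMap.funLeft k k (Quot.mk (Relation.EqvGen (edgeRel E)))) := by
  ext f
  rw [mem_dualAnnihilator_edgeSpan_iff]
  constructor
  · intro hf
    have hedge : ∀ a b, edgeRel E a b → f (Pi.single a 1) = f (Pi.single b 1) :=
      fun a b hab ↦ hf (a, b) hab
    have hconst : ∀ a b, Relation.EqvGen (edgeRel E) a b →
        f (Pi.single a 1) = f (Pi.single b 1) := fun a b hab ↦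
      congrArg (Quot.lift (fun v ↦ f (Pi.single v 1)) hedge) (Quot.eqvGen_sound hab)
    refine ⟨Quot.lift (fun v ↦ f (Pi.single v 1)) hconst, (Pi.basisFun k V).ext fun v ↦ ?_⟩
    simp [piEquiv_apply_single, LinearMap.funLeft_apply]
  · rintro ⟨g, rfl⟩ e he
    have hcomponent : Quot.mk (Relation.EqvGen (edgeRel E)) e.1 = Quot.mk _ e.2 :=
      Quot.sound (.rel _ _ he)
    simp [piEquiv_apply_single, LinearMap.funLeft_apply, hcomponent]

theorem finrank_dualAnnihilator_edgeSpan [CommRing k] [Nontrivial k] [Finite V]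
    (E : Set (V × V)) : Module.finrank k (edgeSpan k E).dualAnnihilator = numComponents E := by
  have : Fintype (Quot (Relation.EqvGen (edgeRel E))) := Fintype.ofFinite _
  have hinj : Function.Injective ((Module.piEquiv V k k).toLinearMap ∘ₗ
      LinearMap.funLeft k k (Quot.mk (Relation.EqvGen (edgeRel E)))) :=
    (Module.piEquiv V k k).injective.comp
      (LinearMap.funLeft_injective_of_surjective k k _ Quot.mk_surjective)
  rw [dualAnnihilator_edgeSpan, LinearMap.finrank_range_of_inj hinj,
    Module.finrank_fintype_fun_eq_card, numComponents, Nat.card_eq_fintype_card]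

theorem finrank_edgeSpan_add_numComponents [Field k] [Fintype V] (E : Set (V × V)) :
    Module.finrank k (edgeSpan k E) + numComponents E = Fintype.card V := by
  rw [← finrank_dualAnnihilator_edgeSpan (k := k),
    Subspace.finrank_add_finrank_dualAnnihilator_eq, Module.finrank_fintype_fun_eq_card]

end EdgeSpan

section DirectedEdgePolytope

variable {V : Type*}

theorem polyDim_convexHull {s : Set (V → ℝ)} (hs : s.Nonempty) :
    polyDim (convexHull ℝ s) = Module.finrank ℝ (vectorSpan ℝ s) := by
  rw [polyDim, if_neg hs.convexHull.ne_empty, affineSpan_convexHull, direction_affineSpan]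

variable [DecidableEq V]

theorem epsVec_eq_single_sub_single :
    (epsVec : V × V → V → ℝ) = fun e ↦ Pi.single e.1 1 - Pi.single e.2 1 := by
  ext e u
  simp [epsVec, Pi.single_apply]

theorem span_image_epsVec (E : Set (V × V)) :
    Submodule.span ℝ (epsVec '' E) = edgeSpan ℝ E := by
  rw [edgeSpan, epsVec_eq_single_sub_single]

theorem hasRankFn_of_linearMap_eq_one {E : Set (V × V)} (f : (V → ℝ) →ₗ[ℝ] ℝ)
    (hf : ∀ e ∈ E, f (epsVec e) = 1) : HasRankFn E := by
  refine ⟨fun v ↦ -f (Pi.single v 1), fun e he ↦ ?_⟩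
  have hfe := hf e he
  rw [epsVec_eq_single_sub_single, map_sub] at hfe
  linarith

theorem zero_mem_affineSpan_image_epsVec_of_not_hasRankFn {E : Set (V × V)} (hE : ¬ HasRankFn E) :
    (0 : V → ℝ) ∈ affineSpan ℝ (epsVec '' E) := by
  by_contra h
  obtain ⟨f, hf⟩ := exists_linearMap_eq_one_of_zero_notMem_affineSpan h
  exact hE (hasRankFn_of_linearMap_eq_one f fun e he ↦ hf _ (Set.mem_image_of_mem _ he))

end DirectedEdgePolytope

theorem dim_ge_of_no_rank_function_general {V : Type*} [Fintype V] [DecidableEq V]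
    (Q1 : Set (V × V)) (hrank : ¬ HasRankFn Q1) :
    polyDim (DE Q1) = (Fintype.card V : ℤ) - (numComponents Q1 : ℤ) := by
  have hzero := zero_mem_affineSpan_image_epsVec_of_not_hasRankFn hrank
  rw [DE, polyDim_convexHull ((affineSpan_nonempty ℝ).1 ⟨0, hzero⟩),
    vectorSpan_eq_span_of_zero_mem_affineSpan hzero, span_image_epsVec,
    ← finrank_edgeSpan_add_numComponents (k := ℝ) Q1, Nat.cast_add, add_sub_cancel_right]

/-- If `Q` has no rank function, then `dim DE(Q) ≥ |Q_0| - |π_0(Q)|`. -/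
theorem dim_ge_of_no_rank_function {V : Type*} [Fintype V] [DecidableEq V]
    (Q1 : Set (V × V)) (hloop : ∀ v : V, (v, v) ∉ Q1) (hrank : ¬ HasRankFn Q1) :
    (Fintype.card V : ℤ) - (numComponents Q1 : ℤ) ≤ polyDim (DE Q1) :=
  (dim_ge_of_no_rank_function_general Q1 hrank).ge
end

section
/- Let Q be a finite quiver without loops and multiedges and let R be a lluf subquiver of Q with |π_0(R)| = |π_0(Q)| + 1. If DE(R) is a facet of DE(Q), then each connected component of R is a full subquiver of Q. -/
open scoped BigOperators

/-
Two vertices `v`, `w` are connected in `R` exactly when `ε_(v,w)` lies in the linear span of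
`DE(R)`, and `ε_(v,w)` with `v ≠ w` lies in an edge polytope only if `(v,w)` is one of its edges.
So it suffices that a facet `F` of `P` with `span F ≠ span P` satisfies `P ∩ span F = F`.
As `F` has codimension one in `P`, the space `vectorSpan P ⊓ span F`, which lies between
`vectorSpan F` and `vectorSpan P`, is one of these two. If it were `vectorSpan P`, then `span F`
would contain a point of `P` and all differences of points of `P`, hence `P`. So it is
`vectorSpan F`, which puts `P ∩ span F` inside the affine span of `F`.
-/

section Span

theorem span_convexHull {𝕜 E : Type*} [Semiring 𝕜] [PartialOrder 𝕜] [AddCommMonoid E] [Module 𝕜 E]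
    (s : Set E) : Submodule.span 𝕜 (convexHull 𝕜 s) = Submodule.span 𝕜 s :=
  le_antisymm
    (Submodule.span_le.2 (convexHull_min Submodule.subset_span (Submodule.span 𝕜 s).convex))
    (Submodule.span_mono (subset_convexHull 𝕜 s))

theorem vectorSpan_le_span {k E : Type*} [Ring k] [AddCommGroup E] [Module k E] (s : Set E) :
    vectorSpan k s ≤ Submodule.span k s := by
  rw [vectorSpan_def, Submodule.span_le]
  rintro _ ⟨x, hx, y, hy, rfl⟩
  exact sub_mem (Submodule.subset_span hx) (Submodule.subset_span hy)

theorem covBy_of_finrank_eq_add_one {K E : Type*} [DivisionRing K] [AddCommGroup E] [Module K E]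
    {S T : Submodule K E} (hST : S ≤ T)
    (hrank : Module.finrank K T = Module.finrank K S + 1) : S ⋖ T := by
  have : FiniteDimensional K T := Module.finite_of_finrank_eq_succ hrank
  refine ⟨lt_of_le_of_ne hST ?_, fun U hSU hUT => ?_⟩
  · rintro rfl
    omega
  · have : FiniteDimensional K U := Submodule.finiteDimensional_of_le hUT.le
    have hSU' := Submodule.finrank_lt_finrank_of_lt hSU
    have hUT' := Submodule.finrank_lt_finrank_of_lt hUT
    omega

variable {k E : Type*} [Ring k] [AddCommGroup E] [Module k E] {s t : Set E}

theorem vectorSpan_inf_span_eq_of_covBy (hst : s ⊆ t) (hs : s.Nonempty)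
    (hcov : vectorSpan k s ⋖ vectorSpan k t) (hspan : Submodule.span k s ≠ Submodule.span k t) :
    vectorSpan k t ⊓ Submodule.span k s = vectorSpan k s := by
  refine (hcov.eq_or_eq (le_inf hcov.le (vectorSpan_le_span s)) inf_le_left).resolve_right ?_
  intro htop
  obtain ⟨p, hp⟩ := hs
  refine hspan (le_antisymm (Submodule.span_mono hst) (Submodule.span_le.2 fun x hx => ?_))
  rw [SetLike.mem_coe]
  have hdiff : x - p ∈ Submodule.span k s :=
    inf_eq_left.1 htop (vsub_mem_vectorSpan k hx (hst hp))
  simpa only [sub_add_cancel] using add_mem hdiff (Submodule.subset_span hp)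

theorem mem_affineSpan_of_mem_span_of_covBy (hst : s ⊆ t) (hs : s.Nonempty)
    (hcov : vectorSpan k s ⋖ vectorSpan k t) (hspan : Submodule.span k s ≠ Submodule.span k t)
    {x : E} (hxt : x ∈ t) (hxs : x ∈ Submodule.span k s) : x ∈ affineSpan k s := by
  obtain ⟨p, hp⟩ := hs
  have hdiff : x - p ∈ vectorSpan k t ⊓ Submodule.span k s :=
    ⟨vsub_mem_vectorSpan k hxt (hst hp), sub_mem hxs (Submodule.subset_span hp)⟩
  rw [vectorSpan_inf_span_eq_of_covBy hst ⟨p, hp⟩ hcov hspan] at hdiff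
  simpa only [vadd_eq_add, sub_add_cancel] using
    vadd_mem_affineSpan_of_mem_affineSpan_of_mem_vectorSpan (mem_affineSpan k hp) hdiff

end Span

section Faces

variable {V : Type*} {F P : Set (V → ℝ)}

theorem polyDim_of_nonempty {s : Set (V → ℝ)} (hs : s.Nonempty) :
    polyDim s = Module.finrank ℝ (vectorSpan ℝ s) := by
  rw [polyDim, if_neg hs.ne_empty, direction_affineSpan]

theorem IsFaceOf.subset (h : IsFaceOf F P) : F ⊆ P := by
  rcases h with rfl | ⟨l, c, -, rfl⟩
  · exact Set.Subset.rfl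
  · exact Set.sep_subset P _

theorem IsFaceOf.mem_of_mem_affineSpan (h : IsFaceOf F P) {x : V → ℝ} (hxP : x ∈ P)
    (hxF : x ∈ affineSpan ℝ F) : x ∈ F := by
  rcases h with rfl | ⟨l, c, -, hF⟩
  · exact hxP
  have hle : affineSpan ℝ F ≤ (affineSpan ℝ {c}).comap l.toAffineMap :=
    affineSpan_le.2 fun y hy => by
      rw [hF] at hy
      simpa using hy.2
  have hlx : l x = c := by simpa using hle hxF
  rw [hF]
  exact ⟨hxP, hlx⟩

theorem IsFacetOf.vectorSpan_covBy (h : IsFacetOf F P) (hF : F.Nonempty) :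
    vectorSpan ℝ F ⋖ vectorSpan ℝ P := by
  have hdim := h.2
  rw [polyDim_of_nonempty hF, polyDim_of_nonempty (hF.mono h.1.subset)] at hdim
  exact covBy_of_finrank_eq_add_one (vectorSpan_mono ℝ h.1.subset) (by omega)

theorem IsFacetOf.subsingleton_of_empty [Finite V] (h : IsFacetOf ∅ P) : P.Subsingleton := by
  rcases P.eq_empty_or_nonempty with rfl | hP
  · exact Set.subsingleton_empty
  have hdim := h.2
  rw [polyDim_of_nonempty hP, polyDim, if_pos rfl] at hdim
  rw [← vectorSpan_eq_bot_iff_subsingleton ℝ, ← Submodule.finrank_eq_zero (R := ℝ)]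
  omega

theorem IsFacetOf.inter_span_eq [Finite V] (h : IsFacetOf F P)
    (hspan : Submodule.span ℝ F ≠ Submodule.span ℝ P) :
    P ∩ Submodule.span ℝ F = F := by
  refine Set.Subset.antisymm ?_ (Set.subset_inter h.1.subset Submodule.subset_span)
  rintro x ⟨hxP, hxF⟩
  rcases F.eq_empty_or_nonempty with rfl | hF
  · obtain rfl : x = 0 := by simpa using hxF
    have hP : P = {0} := h.subsingleton_of_empty.eq_singleton_of_mem hxP
    exact absurd (by simp [hP]) hspan
  · exact h.1.mem_of_mem_affineSpan hxP
      (mem_affineSpan_of_mem_span_of_covBy h.1.subset hF (h.vectorSpan_covBy hF) hspan hxP hxF)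

end Faces

section EdgePolytope

variable {V : Type*} [DecidableEq V] {E E' : Set (V × V)} {v w : V}

theorem epsVec_eq_single_sub_single_s15 (v w : V) :
    epsVec (v, w) = Pi.single v 1 - Pi.single w 1 := by
  ext u
  simp only [epsVec, Pi.sub_apply, Pi.single_apply]

theorem epsVec_apply_sub_apply_le_one {e : V × V} (he : e ≠ (v, w)) :
    epsVec e v - epsVec e w ≤ 1 := by
  have hne : v = e.1 → w ≠ e.2 := fun hv hw => he (Prod.ext hv.symm hw.symm)
  simp only [epsVec]
  split_ifs <;> first | exact absurd ‹w = e.2› (hne ‹v = e.1›) | norm_num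

theorem epsVec_mem_DE_iff (hvw : v ≠ w) : epsVec (v, w) ∈ DE E ↔ (v, w) ∈ E := by
  refine ⟨fun hmem => ?_, fun hE => subset_convexHull ℝ _ ⟨_, hE, rfl⟩⟩
  by_contra hE
  let coordDiff : (V → ℝ) →ₗ[ℝ] ℝ :=
    LinearMap.proj (R := ℝ) (φ := fun _ => ℝ) v - LinearMap.proj w
  have hsub : DE E ⊆ {x | coordDiff x ≤ 1} := by
    refine convexHull_min ?_ (convex_halfSpace_le coordDiff.isLinear 1)
    rintro _ ⟨e, he, rfl⟩
    exact epsVec_apply_sub_apply_le_one (ne_of_mem_of_not_mem he hE)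
  have hle : coordDiff (epsVec (v, w)) ≤ 1 := hsub hmem
  have htwo : coordDiff (epsVec (v, w)) = 2 := by
    norm_num [coordDiff, epsVec, hvw, hvw.symm]
  linarith

theorem epsVec_mem_span_of_eqvGen (h : Relation.EqvGen (edgeRel E) v w) :
    epsVec (v, w) ∈ Submodule.span ℝ (epsVec '' E) := by
  induction h with
  | rel a b hab => exact Submodule.subset_span ⟨(a, b), hab, rfl⟩
  | refl a => simp only [epsVec_eq_single_sub_single_s15, sub_self, zero_mem]
  | symm a b _ hab =>
    rw [epsVec_eq_single_sub_single_s15] at hab ⊢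
    simpa only [neg_sub] using neg_mem hab
  | trans a b c _ _ hab hbc =>
    rw [epsVec_eq_single_sub_single_s15] at hab hbc ⊢
    simpa only [sub_add_sub_cancel] using add_mem hab hbc

theorem dotProduct_epsVec [Fintype V] (g : V → ℝ) (v w : V) : g ⬝ᵥ epsVec (v, w) = g v - g w := by
  rw [epsVec_eq_single_sub_single_s15, dotProduct_sub, dotProduct_single_one, dotProduct_single_one]

theorem dotProduct_eq_zero_of_mem_span_epsVec [Fintype V] {g x : V → ℝ}
    (hg : ∀ e ∈ E, g e.1 = g e.2) (hx : x ∈ Submodule.span ℝ (epsVec '' E)) : g ⬝ᵥ x = 0 := by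
  have hle : Submodule.span ℝ (epsVec '' E) ≤ LinearMap.ker (dotProductBilin ℝ ℝ g) := by
    rw [Submodule.span_le]
    rintro _ ⟨e, he, rfl⟩
    exact (dotProduct_epsVec g e.1 e.2).trans (sub_eq_zero.2 (hg e he))
  exact hle hx

theorem eqvGen_of_epsVec_mem_span [Finite V]
    (h : epsVec (v, w) ∈ Submodule.span ℝ (epsVec '' E)) :
    Relation.EqvGen (edgeRel E) v w := by
  have := Fintype.ofFinite V
  let component : Set V := {u | Relation.EqvGen (edgeRel E) v u}
  have hedge : ∀ e ∈ E, e.1 ∈ component ↔ e.2 ∈ component := fun e he =>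
    ⟨fun hv => hv.trans _ _ _ (.rel _ _ he), fun hv => hv.trans _ _ _ (.symm _ _ (.rel _ _ he))⟩
  let g : V → ℝ := component.indicator 1
  have hg : ∀ e ∈ E, g e.1 = g e.2 := fun e he => by
    classical simp only [g, Set.indicator_apply, hedge e he, Pi.one_apply]
  have hgvw : g v - g w = 0 := by
    rw [← dotProduct_epsVec, dotProduct_eq_zero_of_mem_span_epsVec hg h]
  have hgv : g v = 1 := Set.indicator_of_mem (Relation.EqvGen.refl v) 1
  by_contra hw
  have hgw : g w = 0 := Set.indicator_of_notMem hw 1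
  linarith

theorem epsVec_mem_span_DE_iff [Finite V] :
    epsVec (v, w) ∈ Submodule.span ℝ (DE E) ↔ Relation.EqvGen (edgeRel E) v w := by
  rw [DE, span_convexHull]
  exact ⟨eqvGen_of_epsVec_mem_span, epsVec_mem_span_of_eqvGen⟩

theorem numComponents_eq_of_span_DE_eq [Finite V]
    (h : Submodule.span ℝ (DE E) = Submodule.span ℝ (DE E')) :
    numComponents E = numComponents E' := by
  have hconn : Relation.EqvGen (edgeRel E) = Relation.EqvGen (edgeRel E') := by
    ext v w
    rw [← epsVec_mem_span_DE_iff, h, epsVec_mem_span_DE_iff]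
  rw [numComponents, hconn, numComponents]

end EdgePolytope

/-- If `DE(R)` is a facet of `DE(Q)` and `|π_0(R)| = |π_0(Q)| + 1`, then each connected
component of `R` is a full subquiver of `Q`. -/
theorem facet_is_full {V : Type*} [Fintype V] [DecidableEq V]
    (Q1 R1 : Set (V × V)) (hloop : ∀ v : V, (v, v) ∉ Q1) (hsub : R1 ⊆ Q1)
    (hcomp : numComponents R1 = numComponents Q1 + 1)
    (hfacet : IsFacetOf (DE R1) (DE Q1)) :
    ComponentsFull Q1 R1 := by
  intro v w hconn hQ
  have hne : v ≠ w := fun h => hloop w (h ▸ hQ)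
  have hspan : Submodule.span ℝ (DE R1) ≠ Submodule.span ℝ (DE Q1) := fun h => by
    have heq := numComponents_eq_of_span_DE_eq h
    omega
  have hmem : epsVec (v, w) ∈ DE Q1 ∩ Submodule.span ℝ (DE R1) :=
    ⟨(epsVec_mem_DE_iff hne).2 hQ, epsVec_mem_span_DE_iff.2 hconn⟩
  rw [hfacet.inter_span_eq hspan] at hmem
  exact (epsVec_mem_DE_iff hne).1 hmem
end

section
/- Let Q be a finite quiver without loops and multiedges and let R be a lluf subquiver of Q with |π_0(R)| = |π_0(Q)|. If DE(R) is a facet of DE(Q), then Q does not admit a rank function and R admits a rank function ρ ∈ ℝ^{Q_0} such that (ρ(v)−ρ(w)+1)(ρ(v')−ρ(w')+1) > 0 for any (v,w),(v',w') ∈ Q_1 ∖ R_1. -/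
open scoped BigOperators

/-!
A functional supporting `DE(R)` is, on the basis vectors, a potential `λ` on the vertices with
`λ v - λ w = c` on the edges of `R` and `λ v - λ w < c` on the other edges of `Q`. If `c` were `0`,
then `λ` would be constant on the components of `R`; these are the components of `Q`, so the
functional would vanish on all of `DE(Q)` and the face would not be proper. Hence `ρ = -λ / c` is
defined. It is a rank function of `R`, and `ρ v - ρ w + 1 = (c - (λ v - λ w)) / c` has the sign of
`c` on the edges outside `R`. Finally, a rank function of `Q` would differ from `ρ` by a constant on
each component, so `ρ` would be a rank function of `Q` too, and that sign would be `0`.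
-/

/-- `ρ` is a rank function of the quiver with edge set `E`; `HasRankFn E` asserts that one
exists. -/
def IsRankFn {V : Type*} (E : Set (V × V)) (ρ : V → ℝ) : Prop :=
  ∀ e ∈ E, ρ e.1 + 1 = ρ e.2

section Components

variable {V : Type*} {Q R : Set (V × V)}

lemma apply_eq_of_eqvGen {α : Type*} {f : V → α} (hf : ∀ e ∈ R, f e.1 = f e.2) {v w : V}
    (h : Relation.EqvGen (edgeRel R) v w) : f v = f w :=
  (eq_equivalence.comap f).eqvGen_iff.1 (h.mono fun a b hab => hf (a, b) hab)

lemma eqvGen_of_numComponents_eq [Finite (Quot (Relation.EqvGen (edgeRel R)))] (hsub : R ⊆ Q)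
    (hcomp : numComponents R = numComponents Q) :
    ∀ e ∈ Q, Relation.EqvGen (edgeRel R) e.1 e.2 := by
  intro e he
  let φ : Quot (Relation.EqvGen (edgeRel R)) → Quot (Relation.EqvGen (edgeRel Q)) :=
    Quot.map id fun _ _ h => h.mono fun _ _ hab => hsub hab
  have φ_surjective : Function.Surjective φ := Quot.ind fun v => ⟨Quot.mk _ v, rfl⟩
  have φ_injective : Function.Injective φ :=
    ((Nat.bijective_iff_surjective_and_card φ).2 ⟨φ_surjective, hcomp⟩).1
  have mk_eq : Quot.mk (Relation.EqvGen (edgeRel R)) e.1 = Quot.mk _ e.2 :=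
    φ_injective (Quot.sound (.rel _ _ he))
  exact (Relation.EqvGen.is_equivalence _).eqvGen_iff.1 (Quot.eqvGen_exact mk_eq)

lemma IsRankFn.of_hasRankFn (hsub : R ⊆ Q) (hconn : ∀ e ∈ Q, Relation.EqvGen (edgeRel R) e.1 e.2)
    (hQ : HasRankFn Q) {ρ : V → ℝ} (hρ : IsRankFn R ρ) : IsRankFn Q ρ := by
  obtain ⟨σ, hσ⟩ := hQ
  intro e he
  have sub_const : ρ e.1 - σ e.1 = ρ e.2 - σ e.2 :=
    apply_eq_of_eqvGen (f := fun v => ρ v - σ v)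
      (fun a ha => by linarith [hρ a ha, hσ a (hsub ha)]) (hconn e he)
  linarith [hσ e he]

lemma exists_isRankFn_of_potential {pot : V → ℝ} {c : ℝ} (hc : c ≠ 0)
    (hR : ∀ e ∈ R, pot e.1 - pot e.2 = c) (hQ : ∀ e ∈ Q \ R, pot e.1 - pot e.2 < c) :
    ∃ ρ : V → ℝ, IsRankFn R ρ ∧
      ∀ e ∈ Q \ R, ∀ e' ∈ Q \ R, 0 < (ρ e.1 - ρ e.2 + 1) * (ρ e'.1 - ρ e'.2 + 1) := by
  have slack (v w : V) : -pot v / c - -pot w / c + 1 = (c - (pot v - pot w)) / c := by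
    field_simp
    ring
  refine ⟨fun v => -pot v / c, fun e he => ?_, fun e he e' he' => ?_⟩
  · have slack_eq_zero := slack e.1 e.2
    rw [hR e he, sub_self, zero_div] at slack_eq_zero
    linarith
  · rw [slack, slack, div_mul_div_comm]
    exact div_pos (mul_pos (sub_pos.2 (hQ e he)) (sub_pos.2 (hQ e' he'))) (mul_self_pos.2 hc)

end Components

section Polytope

variable {V : Type*} [DecidableEq V] {Q R : Set (V × V)}

lemma map_epsVec (l : (V → ℝ) →ₗ[ℝ] ℝ) (e : V × V) :
    l (epsVec e) = l (Pi.single e.1 1) - l (Pi.single e.2 1) := by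
  rw [← map_sub]
  congr 1
  ext u
  simp [epsVec, Pi.single_apply]

lemma epsVec_mem_DE {e : V × V} (he : e ∈ R) : epsVec e ∈ DE R :=
  subset_convexHull ℝ _ (Set.mem_image_of_mem epsVec he)

lemma mem_of_epsVec_mem_DE {e : V × V} (hne : e.1 ≠ e.2) (h : epsVec e ∈ DE R) : e ∈ R := by
  -- Among all `ε_a`, the functional `x ↦ x_v - x_w` is at least `2` only for `a = (v, w)`.
  let d : (V → ℝ) →ₗ[ℝ] ℝ := .proj e.1 - .proj e.2
  obtain ⟨_, ⟨a, ha, rfl⟩, hle⟩ :=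
    (d.convexOn convex_univ).exists_ge_of_mem_convexHull (Set.subset_univ _) h
  have two_le : 2 ≤ epsVec a e.1 - epsVec a e.2 := by
    have d_epsVec : d (epsVec e) = 2 := by
      norm_num [d, epsVec, hne, hne.symm]
    exact d_epsVec ▸ hle
  have eq_edge : e = a := by
    simp only [epsVec] at two_le
    ext <;> grind
  exact eq_edge ▸ ha

lemma apply_eq_of_mem_DE {l : (V → ℝ) →ₗ[ℝ] ℝ} {c : ℝ} (hl : ∀ e ∈ R, l (epsVec e) = c) :
    ∀ x ∈ DE R, l x = c :=
  convexHull_min (Set.forall_mem_image.2 hl) (convex_hyperplane l.isLinear c)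

lemma map_epsVec_eq_zero_of_eqvGen (hconn : ∀ e ∈ Q, Relation.EqvGen (edgeRel R) e.1 e.2)
    {l : (V → ℝ) →ₗ[ℝ] ℝ} (hl : ∀ e ∈ R, l (epsVec e) = 0) : ∀ e ∈ Q, l (epsVec e) = 0 := by
  simp only [map_epsVec, sub_eq_zero] at hl ⊢
  exact fun e he => apply_eq_of_eqvGen (f := fun v => l (Pi.single v 1)) hl (hconn e he)

lemma exists_potential_of_isFaceOf (hface : IsFaceOf (DE R) (DE Q)) (hne : DE R ≠ DE Q)
    (hconn : ∀ e ∈ Q, Relation.EqvGen (edgeRel R) e.1 e.2) :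
    ∃ (pot : V → ℝ) (c : ℝ), c ≠ 0 ∧ (∀ e ∈ R, pot e.1 - pot e.2 = c) ∧
      ∀ e ∈ Q \ R, pot e.1 - pot e.2 < c := by
  obtain ⟨l, c, hle, hDE⟩ := hface.resolve_left hne
  have eq_on_R : ∀ e ∈ R, l (epsVec e) = c := fun e he => (hDE.subset (epsVec_mem_DE he)).2
  have c_ne_zero : c ≠ 0 := by
    rintro rfl
    have eq_on_DE := apply_eq_of_mem_DE (map_epsVec_eq_zero_of_eqvGen hconn eq_on_R)
    exact hne (hDE.trans (Set.sep_eq_self_iff_mem_true.2 eq_on_DE))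
  have lt_off_R : ∀ e ∈ Q \ R, l (epsVec e) < c := by
    intro e he
    refine (hle _ (epsVec_mem_DE he.1)).lt_of_ne fun heq => ?_
    by_cases hloop : e.1 = e.2
    · exact c_ne_zero (by rw [← heq, map_epsVec, hloop, sub_self])
    · exact he.2 (mem_of_epsVec_mem_DE hloop (hDE.superset ⟨epsVec_mem_DE he.1, heq⟩))
  simp only [map_epsVec] at eq_on_R lt_off_R
  exact ⟨fun v => l (Pi.single v 1), c, c_ne_zero, eq_on_R, lt_off_R⟩

end Polytope

lemma ne_of_isFacetOf {V : Type*} {F P : Set (V → ℝ)} (h : IsFacetOf F P) : F ≠ P := by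
  rintro rfl
  have dim_eq := h.2
  omega

theorem facet_has_rank_function_general {V : Type*} [DecidableEq V] {Q R : Set (V × V)}
    (hsub : R ⊆ Q) (hconn : ∀ e ∈ Q, Relation.EqvGen (edgeRel R) e.1 e.2)
    (hface : IsFaceOf (DE R) (DE Q)) (hne : DE R ≠ DE Q) :
    ¬ HasRankFn Q ∧
      ∃ ρ : V → ℝ, IsRankFn R ρ ∧
        ∀ e ∈ Q \ R, ∀ e' ∈ Q \ R, 0 < (ρ e.1 - ρ e.2 + 1) * (ρ e'.1 - ρ e'.2 + 1) := by
  obtain ⟨pot, c, hc, pot_R, pot_Q⟩ := exists_potential_of_isFaceOf hface hne hconn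
  obtain ⟨ρ, ρ_rank, ρ_pos⟩ := exists_isRankFn_of_potential hc pot_R pot_Q
  refine ⟨fun hQ => ?_, ρ, ρ_rank, ρ_pos⟩
  obtain ⟨e, he⟩ : (Q \ R).Nonempty :=
    Set.sdiff_nonempty.2 fun h => hne (congrArg DE (hsub.antisymm h))
  have slack_eq_zero : ρ e.1 - ρ e.2 + 1 = 0 := by
    linarith [ρ_rank.of_hasRankFn hsub hconn hQ e he.1]
  simpa [slack_eq_zero] using ρ_pos e he e he

/-- If `DE(R)` is a facet of `DE(Q)` and `|π_0(R)| = |π_0(Q)|`, then `Q` has no rank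
function and `R` has a rank function with the positivity condition on `Q_1 \ R_1`. -/
theorem facet_has_rank_function {V : Type*} [Fintype V] [DecidableEq V]
    (Q1 R1 : Set (V × V)) (hloop : ∀ v : V, (v, v) ∉ Q1) (hsub : R1 ⊆ Q1)
    (hcomp : numComponents R1 = numComponents Q1)
    (hfacet : IsFacetOf (DE R1) (DE Q1)) :
    ¬ HasRankFn Q1 ∧
      ∃ ρ : V → ℝ, (∀ e ∈ R1, ρ e.1 + 1 = ρ e.2) ∧
        ∀ e ∈ Q1 \ R1, ∀ e' ∈ Q1 \ R1,
          0 < (ρ e.1 - ρ e.2 + 1) * (ρ e'.1 - ρ e'.2 + 1) :=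
  facet_has_rank_function_general hsub (eqvGen_of_numComponents_eq hsub hcomp) hfacet.1
    (ne_of_isFacetOf hfacet)
end
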